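/- Grade ℂ[b,t,k] by deg b = deg t = 1 and deg k = 2, so that u_{n+1}, v_{n+1}, w_{n+1} are homogeneous of degrees n+2, n+1 and n respectively. Then for every n ≥ 1 the Hilbert series of the graded quotient satisfies (1−T)²·(1−T²) · Σ_{p≥0} dim_ℂ( (ℂ[b,t,k]/(u_{n+1},v_{n+1},w_{n+1}))_p ) · T^p = (1−Tⁿ)(1−T^{n+1})(1−T^{n+2}) in ℤ[[T]]. -/

import Mathlib

open MvPolynomial

noncomputable section

/-- `ℂ[b,t,k]`, with variables `0 = b`, `1 = t`, `2 = k`. -/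
abbrev R3 : Type := MvPolynomial (Fin 3) ℂ

/-- The weights: `deg b = deg t = 1`, `deg k = 2`. -/
def w3 : Fin 3 → ℕ := ![1, 1, 2]

/-- The 3×3 matrix `A` with rows `(b,0,0)`, `(1,0,k)`, `(0,1,t)`. -/
def A3 : Matrix (Fin 3) (Fin 3) R3 :=
  !![X 0, 0, 0;
     1, 0, X 2;
     0, 1, X 1]

/-- `G₁ = (b(2b−t), 2b−t, 2)ᵀ`. -/
def G1 : Fin 3 → R3 := ![X 0 * (2 * X 0 - X 1), 2 * X 0 - X 1, 2]

/-- `G_{n+1} = Aⁿ·G₁`, with components `u_{n+1}, v_{n+1}, w_{n+1}`. -/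
def G (n : ℕ) : Fin 3 → R3 := (A3 ^ n).mulVec G1

/-- The degree-`p` homogeneous component of the graded quotient
`ℂ[b,t,k]/(u_{n+1},v_{n+1},w_{n+1})`: the image of the space of weighted-homogeneous
polynomials of degree `p` under the quotient map. -/
def comp3 (n p : ℕ) : Submodule ℂ (R3 ⧸ Ideal.span {G n 0, G n 1, G n 2}) :=
  (weightedHomogeneousSubmodule ℂ w3 p).map
    (Ideal.Quotient.mkₐ ℂ (Ideal.span {G n 0, G n 1, G n 2})).toLinearMap

/-!
If `f` is homogeneous of degree `d` and a nonzerodivisor modulo `I`, passing from `S ⧸ I` to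
`S ⧸ (I + (f))` multiplies the Hilbert series by `1 - T ^ d`. Since the series of `ℂ[b,t,k]` is
`1 / ((1 - T) ^ 2 * (1 - T ^ 2))`, it suffices that `u_{n+1}, v_{n+1}, w_{n+1}` is a regular
sequence. Here `u_{n+1} = b ^ (n + 1) * (2 * b - t)`, and regularity may be checked with `u_{n+1}`
replaced by each of its factors `b` and `2 * b - t`. Modulo such a factor the recursion becomes
`v_{n+1} = k * w_n`, `w_{n+2} = k * w_n + t * w_{n+1}`. The prime `k` divides none of `t`, `w_1`,
`w_2`, hence no `w_n`, and `v_{n+1}` and `w_{n+1}` are coprime by induction.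
-/

section RegularSequence

open RingTheory.Sequence
open scoped Pointwise

variable {R M N P : Type*} [CommRing R] [AddCommGroup M] [Module R M] [AddCommGroup N]
  [Module R N] [AddCommGroup P] [Module R P]

theorem isWeaklyRegular_of_exact {f : M →ₗ[R] N} {g : N →ₗ[R] P}
    (hf : Function.Injective f) (hfg : Function.Exact f g) (hg : Function.Surjective g)
    {rs : List R} (hM : IsWeaklyRegular M rs) (hP : IsWeaklyRegular P rs) :
    IsWeaklyRegular N rs := by
  induction rs generalizing M N P with
  | nil => exact .nil R N
  | cons r rs ih =>
    obtain ⟨hrM, hM⟩ := (isWeaklyRegular_cons_iff M r rs).1 hM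
    obtain ⟨hrP, hP⟩ := (isWeaklyRegular_cons_iff P r rs).1 hP
    have hf' : Function.Injective (QuotSMulTop.map r f) := by
      have h0 : Function.Exact (0 : M →ₗ[R] M) f :=
        (LinearMap.exact_zero_iff_injective M f).2 hf
      have := QuotSMulTop.map_first_exact_on_four_term_exact_of_isSMulRegular_last h0 hfg hrP
      rw [map_zero] at this
      exact (LinearMap.exact_zero_iff_injective _ _).1 this
    exact .cons (isSMulRegular_of_range_eq_ker hf hfg.linearMap_ker_eq.symm hrM hrP)
      (ih hf' (QuotSMulTop.map_exact r hfg hg) (QuotSMulTop.map_surjective r hg) hM hP)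

-- Multiplication by `r` gives the exact sequence `0 → M/sM → M/rsM → M/rM → 0`.
theorem isWeaklyRegular_mul_cons {r s : R} {rs : List R} (hr : IsWeaklyRegular M (r :: rs))
    (hs : IsWeaklyRegular M (s :: rs)) : IsWeaklyRegular M (r * s :: rs) := by
  obtain ⟨hrM, hr⟩ := (isWeaklyRegular_cons_iff M r rs).1 hr
  obtain ⟨hsM, hs⟩ := (isWeaklyRegular_cons_iff M s rs).1 hs
  have hle : (r * s) • (⊤ : Submodule R M) ≤ r • ⊤ := by
    rw [mul_smul]
    exact smul_mono_right r le_top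
  have hcomap : s • (⊤ : Submodule R M) =
      ((r * s) • (⊤ : Submodule R M)).comap (LinearMap.lsmul R M r) := by
    rw [mul_smul]
    exact (Submodule.comap_map_eq_of_injective (f := LinearMap.lsmul R M r) hrM _).symm
  have hinj : Function.Injective (Submodule.mapQ _ _ (LinearMap.lsmul R M r) hcomap.le) :=
    LinearMap.ker_eq_bot.1 <| Submodule.ker_liftQ_eq_bot' _ _ <| by
      rw [LinearMap.ker_comp, Submodule.ker_mkQ, hcomap]
  have hexact : Function.Exact (Submodule.mapQ _ _ (LinearMap.lsmul R M r) hcomap.le)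
      (Submodule.factor hle) := by
    rw [LinearMap.exact_iff, Submodule.factor, Submodule.ker_mapQ, Submodule.range_mapQ,
      Submodule.comap_id, LinearMap.range_eq_map]
    rfl
  exact .cons (hrM.mul hsM)
    (isWeaklyRegular_of_exact hinj hexact (Submodule.factor_surjective hle) hs hr)

theorem isWeaklyRegular_pow_cons {r : R} {rs : List R} (h : IsWeaklyRegular M (r :: rs))
    (n : ℕ) : IsWeaklyRegular M (r ^ (n + 1) :: rs) := by
  induction n with
  | zero => rwa [zero_add, pow_one]
  | succ n ih => exact pow_succ r (n + 1) ▸ isWeaklyRegular_mul_cons ih h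

theorem isWeaklyRegular_cons_of_ker_eq_span {T : Type*} [CommRing T] {φ : R →+* T}
    (hφ : Function.Surjective φ) {r : R} (hker : RingHom.ker φ = Ideal.span {r})
    (hr : IsSMulRegular R r) {rs : List R} (hrs : IsWeaklyRegular T (rs.map φ)) :
    IsWeaklyRegular R (r :: rs) := by
  algebraize [φ]
  have hspan : r • (⊤ : Submodule R R) = LinearMap.ker (Algebra.linearMap R T) := by
    rw [← Submodule.ideal_span_singleton_smul, ← hker, smul_eq_mul, Ideal.mul_top]
    rfl
  have e : QuotSMulTop r R ≃ₗ[R] T := (Submodule.quotEquivOfEq _ _ hspan).trans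
    ((Algebra.linearMap R T).quotKerEquivOfSurjective hφ)
  exact .cons hr <| (e.isWeaklyRegular_congr rs).2 <|
    (isWeaklyRegular_map_algebraMap_iff T T rs).1 hrs

theorem isWeaklyRegular_pair_of_isRelPrime [IsDomain R] [DecompositionMonoid R] {r s : R}
    (hr : r ≠ 0) (hrs : IsRelPrime r s) : IsWeaklyRegular R [r, s] := by
  rw [isWeaklyRegular_cons_iff, isWeaklyRegular_singleton_iff,
    isSMulRegular_quotient_iff_mem_of_smul_mem]
  refine ⟨IsSMulRegular.of_ne_zero hr, fun x hx => ?_⟩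
  simp only [← Submodule.ideal_span_singleton_smul, smul_eq_mul, Ideal.mul_top,
    Ideal.mem_span_singleton] at hx ⊢
  exact hrs.dvd_of_dvd_mul_left hx

end RegularSequence

section WeightedPolynomials

variable {σ R : Type*}

theorem finrank_weightedHomogeneousSubmodule [CommRing R] [Nontrivial R] {M : Type*}
    [AddCommMonoid M] (w : σ → M) (m : M) :
    Module.finrank R (weightedHomogeneousSubmodule R w m) =
      Nat.card {d : σ →₀ ℕ // Finsupp.weight w d = m} := by
  rw [weightedHomogeneousSubmodule_eq_finsupp_supported]
  exact Module.finrank_eq_nat_card_basis (basisRestrictSupport R {d | Finsupp.weight w d = m})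

theorem natCard_weight_eq_card_filter_finsuppAntidiag [Fintype σ] [DecidableEq σ] {w : σ → ℕ}
    (hw : ∀ i, w i ≠ 0) (p : ℕ) :
    Nat.card {d : σ →₀ ℕ // Finsupp.weight w d = p} =
      ((Finset.univ.finsuppAntidiag p).filter fun l : σ →₀ ℕ => ∀ i, w i ∣ l i).card := by
  rw [← Nat.card_eq_finsetCard]
  refine Nat.card_congr
    { toFun d := ⟨Finsupp.equivFunOnFinite.symm fun i => d.1 i * w i, ?_⟩
      invFun l := ⟨Finsupp.equivFunOnFinite.symm fun i => l.1 i / w i, ?_⟩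
      left_inv d := ?_
      right_inv l := ?_ }
  · simp [Finset.mem_finsuppAntidiag, ← d.2, Finsupp.weight_apply, Finsupp.sum_fintype]
  · obtain ⟨l, hl⟩ := l
    simp only [Finset.mem_filter, Finset.mem_finsuppAntidiag] at hl
    simp [Finsupp.weight_apply, Finsupp.sum_fintype, Nat.div_mul_cancel (hl.2 _), hl.1.1]
  · ext i
    simp [Nat.mul_div_cancel _ (Nat.pos_of_ne_zero (hw i))]
  · ext i
    exact Nat.div_mul_cancel ((Finset.mem_filter.1 l.2).2 i)

theorem one_sub_X_pow_mul_mk_dvd [Ring R] {d : ℕ} (hd : d ≠ 0) :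
    (1 - PowerSeries.X ^ d) * PowerSeries.mk (fun n => if d ∣ n then (1 : R) else 0) = 1 := by
  ext n
  rw [sub_mul, one_mul, map_sub, PowerSeries.coeff_X_pow_mul', PowerSeries.coeff_one]
  simp only [PowerSeries.coeff_mk]
  rcases lt_or_ge n d with h | h
  · have hdvd : d ∣ n ↔ n = 0 :=
      ⟨fun hdn => Nat.eq_zero_of_dvd_of_lt hdn h, fun hn => hn ▸ dvd_zero d⟩
    simp [hdvd, h.not_ge]
  · obtain ⟨e, rfl⟩ := Nat.exists_eq_add_of_le' h
    simp [hd]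

theorem prod_one_sub_X_pow_mul_mk_finrank [CommRing R] [Nontrivial R] [Fintype σ] {w : σ → ℕ}
    (hw : ∀ i, w i ≠ 0) :
    (∏ i, (1 - PowerSeries.X ^ w i)) *
      PowerSeries.mk (fun p => (Module.finrank R (weightedHomogeneousSubmodule R w p) : ℤ)) =
        1 := by
  classical
  have hprod : PowerSeries.mk
      (fun p => (Module.finrank R (weightedHomogeneousSubmodule R w p) : ℤ)) =
        ∏ i, PowerSeries.mk (fun n => if w i ∣ n then (1 : ℤ) else 0) := by
    ext p
    simp only [PowerSeries.coeff_prod, PowerSeries.coeff_mk, Finset.prod_ite_zero,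
      Finset.prod_const_one, Finset.sum_boole, finrank_weightedHomogeneousSubmodule,
      natCard_weight_eq_card_filter_finsuppAntidiag hw, Finset.mem_univ, true_imp_iff]
  rw [hprod, ← Finset.prod_mul_distrib]
  exact Finset.prod_eq_one fun i _ => one_sub_X_pow_mul_mk_dvd (hw i)

theorem ker_eq_of_forall_X_sub_mem [CommRing R] {A : Type*} [CommRing A] [Algebra R A]
    {φ : MvPolynomial σ R →ₐ[R] A} {ψ : A →ₐ[R] MvPolynomial σ R} {J : Ideal (MvPolynomial σ R)}
    (hJ : J ≤ RingHom.ker φ) (hX : ∀ i, X i - ψ (φ (X i)) ∈ J) : RingHom.ker φ = J := by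
  refine le_antisymm (fun x hx => ?_) hJ
  have hmk : Ideal.Quotient.mkₐ R J = (Ideal.Quotient.mkₐ R J).comp (ψ.comp φ) :=
    algHom_ext fun i => Ideal.Quotient.eq.2 (hX i)
  have hx' := DFunLike.congr_fun hmk x
  rw [AlgHom.comp_apply, AlgHom.comp_apply, RingHom.mem_ker.1 hx, map_zero, map_zero] at hx'
  exact Ideal.Quotient.eq_zero_iff_mem.1 hx'

end WeightedPolynomials

theorem ofList_ofFn_eq_span_range {R : Type*} [Semiring R] {m : ℕ} (r : Fin m → R) :
    Ideal.ofList (List.ofFn r) = Ideal.span (Set.range r) := by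
  simp [Ideal.ofList, List.mem_ofFn', Set.range]

section HilbertSeries

open RingTheory.Sequence

variable {K S : Type*} [Field K] [CommRing S] [Algebra K S]

/-- The degree-`p` component of `S ⧸ I`, where `𝒜` is the grading of `S`: the image of `𝒜 p`. -/
def quotientPiece (𝒜 : ℕ → Submodule K S) (I : Ideal S) (p : ℕ) : Submodule K (S ⧸ I) :=
  (𝒜 p).map (Ideal.Quotient.mkₐ K I).toLinearMap

/-- The Hilbert series of `S ⧸ I` with respect to the grading `𝒜` of `S`. It is meaningful only
for homogeneous `I` and finite-dimensional `𝒜 p`, as `finrank` is `0` in infinite dimension. -/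
def hilbertSeries (𝒜 : ℕ → Submodule K S) (I : Ideal S) : PowerSeries ℤ :=
  PowerSeries.mk fun p => (Module.finrank K (quotientPiece 𝒜 I p) : ℤ)

variable {𝒜 : ℕ → Submodule K S} {I J : Ideal S} {a f : S} {d e p : ℕ}

theorem map_factor_quotientPiece (h : I ≤ J) (p : ℕ) :
    (quotientPiece 𝒜 I p).map (Ideal.Quotient.factorₐ K h).toLinearMap = quotientPiece 𝒜 J p := by
  rw [quotientPiece, quotientPiece, ← Submodule.map_comp]
  rfl

theorem finrank_quotientPiece_add_finrank_inf_ker [∀ p, Module.Finite K (𝒜 p)] (h : I ≤ J)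
    (p : ℕ) :
    Module.finrank K (quotientPiece 𝒜 J p) +
      Module.finrank K (quotientPiece 𝒜 I p ⊓
        LinearMap.ker (Ideal.Quotient.factorₐ K h).toLinearMap : Submodule K (S ⧸ I)) =
      Module.finrank K (quotientPiece 𝒜 I p) := by
  have : Module.Finite K (quotientPiece 𝒜 I p) := Module.Finite.map _ _
  rw [← map_factor_quotientPiece h, ← LinearMap.range_domRestrict, ← Submodule.map_comap_subtype,
    LinearEquiv.finrank_eq (Submodule.equivSubtypeMap _ _).symm, ← LinearMap.ker_domRestrict]
  exact LinearMap.finrank_range_add_finrank_ker _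

theorem exists_sub_mul_mem_of_mem_sup_span_singleton [GradedAlgebra 𝒜] (hI : I.IsHomogeneous 𝒜)
    (hf : f ∈ 𝒜 d) (ha : a ∈ 𝒜 (d + e)) (haf : a ∈ I ⊔ Ideal.span {f}) :
    ∃ y ∈ 𝒜 e, a - f * y ∈ I := by
  rw [sup_comm, Ideal.mem_span_singleton_sup] at haf
  obtain ⟨y, i, hi, rfl⟩ := haf
  refine ⟨DirectSum.decompose 𝒜 y e, SetLike.coe_mem _, ?_⟩
  convert hI (d + e) hi using 1
  rw [sub_eq_iff_eq_add', ← DirectSum.coe_decompose_mul_add_of_left_mem 𝒜 hf, mul_comm f,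
    ← Submodule.coe_add, ← DirectSum.add_apply, ← DirectSum.decompose_add,
    DirectSum.decompose_of_mem_same 𝒜 ha]

theorem mem_of_mem_sup_span_singleton_of_lt [GradedAlgebra 𝒜] (hI : I.IsHomogeneous 𝒜)
    (hf : f ∈ 𝒜 d) (hpd : p < d) (ha : a ∈ 𝒜 p) (haf : a ∈ I ⊔ Ideal.span {f}) : a ∈ I := by
  rw [sup_comm, Ideal.mem_span_singleton_sup] at haf
  obtain ⟨y, i, hi, rfl⟩ := haf
  convert hI p hi using 1
  rw [← DirectSum.decompose_of_mem_same 𝒜 ha, DirectSum.decompose_add, DirectSum.add_apply,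
    Submodule.coe_add, mul_comm, DirectSum.coe_decompose_mul_of_left_mem_of_not_le 𝒜 hf hpd.not_ge,
    zero_add]

theorem quotientPiece_inf_ker_factor [GradedAlgebra 𝒜] (hI : I.IsHomogeneous 𝒜) (hf : f ∈ 𝒜 d)
    (e : ℕ) :
    quotientPiece 𝒜 I (d + e) ⊓ LinearMap.ker (Ideal.Quotient.factorₐ K
        (le_sup_left : I ≤ I ⊔ Ideal.span {f})).toLinearMap =
      (quotientPiece 𝒜 I e).map (DistribSMul.toLinearMap K (S ⧸ I) f) := by
  apply le_antisymm
  · rintro _ ⟨⟨a, ha, rfl⟩, haf⟩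
    obtain ⟨y, hy, hay⟩ := exists_sub_mul_mem_of_mem_sup_span_singleton hI hf ha
      (Ideal.Quotient.eq_zero_iff_mem.1 haf)
    exact ⟨Ideal.Quotient.mk I y, ⟨y, hy, rfl⟩, (Ideal.Quotient.eq.2 hay).symm⟩
  · rintro _ ⟨_, ⟨y, hy, rfl⟩, rfl⟩
    exact ⟨⟨f * y, SetLike.mul_mem_graded hf hy, rfl⟩, Ideal.Quotient.eq_zero_iff_mem.2
      (Ideal.mul_mem_right _ _ (Ideal.mem_sup_right (Ideal.mem_span_singleton_self f)))⟩

theorem quotientPiece_inf_ker_factor_of_lt [GradedAlgebra 𝒜] (hI : I.IsHomogeneous 𝒜)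
    (hf : f ∈ 𝒜 d) (hpd : p < d) :
    quotientPiece 𝒜 I p ⊓ LinearMap.ker (Ideal.Quotient.factorₐ K
        (le_sup_left : I ≤ I ⊔ Ideal.span {f})).toLinearMap = ⊥ := by
  rw [eq_bot_iff]
  rintro _ ⟨⟨a, ha, rfl⟩, haf⟩
  exact Ideal.Quotient.eq_zero_iff_mem.2 (mem_of_mem_sup_span_singleton_of_lt hI hf hpd ha
    (Ideal.Quotient.eq_zero_iff_mem.1 haf))

theorem hilbertSeries_sup_span_singleton [GradedAlgebra 𝒜] [∀ p, Module.Finite K (𝒜 p)]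
    (hI : I.IsHomogeneous 𝒜) (hf : f ∈ 𝒜 d) (hreg : IsSMulRegular (S ⧸ I) f) :
    hilbertSeries 𝒜 (I ⊔ Ideal.span {f}) = (1 - PowerSeries.X ^ d) * hilbertSeries 𝒜 I := by
  ext p
  have hadd := finrank_quotientPiece_add_finrank_inf_ker (𝒜 := 𝒜)
    (le_sup_left : I ≤ I ⊔ Ideal.span {f}) p
  rw [sub_mul, one_mul, map_sub, PowerSeries.coeff_X_pow_mul', eq_sub_iff_add_eq]
  simp only [hilbertSeries, PowerSeries.coeff_mk]
  rw [← hadd, Nat.cast_add]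
  split_ifs with hdp
  · obtain ⟨e, rfl⟩ := Nat.exists_eq_add_of_le hdp
    rw [quotientPiece_inf_ker_factor hI hf, add_tsub_cancel_left,
      (Submodule.equivMapOfInjective (DistribSMul.toLinearMap K (S ⧸ I) f) hreg _).finrank_eq]
  · rw [quotientPiece_inf_ker_factor_of_lt hI hf (not_le.1 hdp), finrank_bot, Nat.cast_zero]

theorem hilbertSeries_span_range [GradedAlgebra 𝒜] [∀ p, Module.Finite K (𝒜 p)] {m : ℕ}
    {r : Fin m → S} {d : Fin m → ℕ} (hr : ∀ i, r i ∈ 𝒜 (d i))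
    (hreg : IsWeaklyRegular S (List.ofFn r)) :
    hilbertSeries 𝒜 (Ideal.span (Set.range r)) =
      (∏ i, (1 - PowerSeries.X ^ d i)) * hilbertSeries 𝒜 ⊥ := by
  induction m with
  | zero => simp
  | succ m ih =>
    rw [List.ofFn_succ', List.concat_eq_append, isWeaklyRegular_append_iff,
      isWeaklyRegular_singleton_iff, ofList_ofFn_eq_span_range, smul_eq_mul, Ideal.mul_top] at hreg
    have hspan : Ideal.span (Set.range r) =
        Ideal.span (Set.range fun i : Fin m => r i.castSucc) ⊔ Ideal.span {r (Fin.last m)} := by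
      rw [← ofList_ofFn_eq_span_range, ← ofList_ofFn_eq_span_range, List.ofFn_succ',
        List.concat_eq_append, Ideal.ofList_append, Ideal.ofList_singleton]
    have hhom : (Ideal.span (Set.range fun i : Fin m => r i.castSucc)).IsHomogeneous 𝒜 :=
      Ideal.homogeneous_span 𝒜 _ (Set.forall_mem_range.2 fun i => ⟨_, hr i.castSucc⟩)
    rw [hspan, hilbertSeries_sup_span_singleton hhom (hr (Fin.last m)) hreg.2,
      ih (fun i => hr i.castSucc) hreg.1, Fin.prod_univ_castSucc]
    ring

theorem hilbertSeries_bot (𝒜 : ℕ → Submodule K S) :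
    hilbertSeries 𝒜 ⊥ = PowerSeries.mk fun p => (Module.finrank K (𝒜 p) : ℤ) := by
  simp only [hilbertSeries, quotientPiece]
  congr! 3 with p
  have hinj : Function.Injective (Ideal.Quotient.mkₐ K (⊥ : Ideal S)).toLinearMap :=
    (RingHom.injective_iff_ker_eq_bot (Ideal.Quotient.mk (⊥ : Ideal S))).2 Ideal.mk_ker
  exact (Submodule.equivMapOfInjective _ hinj (𝒜 p)).finrank_eq.symm

theorem prod_mul_hilbertSeries_span_range {σ : Type*} [Fintype σ] {w : σ → ℕ}
    (hw : ∀ i, w i ≠ 0) {m : ℕ} {r : Fin m → MvPolynomial σ K} {d : Fin m → ℕ}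
    (hr : ∀ i, IsWeightedHomogeneous w (r i) (d i))
    (hreg : IsWeaklyRegular (MvPolynomial σ K) (List.ofFn r)) :
    (∏ i, (1 - PowerSeries.X ^ w i)) *
        hilbertSeries (weightedHomogeneousSubmodule K w) (Ideal.span (Set.range r)) =
      ∏ i, (1 - PowerSeries.X ^ d i) := by
  let _ : GradedAlgebra (weightedHomogeneousSubmodule K w) := weightedGradedAlgebra K w
  have (p : ℕ) : Module.Finite K (weightedHomogeneousSubmodule K w p) :=
    Module.Finite.iff_fg.2 (weightedHomogeneousSubmodule_fg K w hw p)
  rw [hilbertSeries_span_range hr hreg, hilbertSeries_bot, mul_left_comm,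
    prod_one_sub_X_pow_mul_mk_finrank hw, mul_one]

end HilbertSeries

section Recurrence

variable {R : Type*} [CommRing R] {k t : R} {w : ℕ → R}

theorem not_dvd_of_recurrence (hk : Prime k) (hrec : ∀ n, w (n + 2) = k * w n + t * w (n + 1))
    (ht : ¬ k ∣ t) (h0 : ¬ k ∣ w 0) (h1 : ¬ k ∣ w 1) (n : ℕ) : ¬ k ∣ w n := by
  induction n using Nat.twoStepInduction with
  | zero => exact h0
  | one => exact h1
  | more n _ ih =>
    rw [hrec, dvd_add_right (dvd_mul_right _ _), hk.dvd_mul]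
    exact not_or.2 ⟨ht, ih⟩

theorem isRelPrime_mul_of_recurrence [IsDomain R] [DecompositionMonoid R] (hk : Prime k)
    (hrec : ∀ n, w (n + 2) = k * w n + t * w (n + 1)) (hw : ∀ n, ¬ k ∣ w n)
    (h01 : IsRelPrime (w 0) (w 1)) (n : ℕ) : IsRelPrime (k * w n) (w (n + 1)) := by
  have hkw (n : ℕ) : IsRelPrime k (w n) := hk.irreducible.isRelPrime_iff_not_dvd.2 (hw n)
  induction n with
  | zero => exact (hkw 1).mul_left h01
  | succ n ih =>
    have hww : IsRelPrime (w (n + 1)) (w (n + 2)) := hrec n ▸ ih.symm.add_mul_right_right t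
    exact (hkw (n + 2)).mul_left hww

end Recurrence

section Components

variable (n : ℕ)

theorem G_zero : G 0 = G1 := by
  rw [G, pow_zero, Matrix.one_mulVec]

theorem G_succ : G (n + 1) = A3.mulVec (G n) := by
  rw [G, G, pow_succ', Matrix.mulVec_mulVec]

theorem G_succ_apply_zero : G (n + 1) 0 = X 0 * G n 0 := by
  simp [G_succ, A3, Matrix.mulVec, dotProduct, Fin.sum_univ_three]

theorem G_succ_apply_one : G (n + 1) 1 = G n 0 + X 2 * G n 2 := by
  simp [G_succ, A3, Matrix.mulVec, dotProduct, Fin.sum_univ_three]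

theorem G_succ_apply_two : G (n + 1) 2 = G n 1 + X 1 * G n 2 := by
  simp [G_succ, A3, Matrix.mulVec, dotProduct, Fin.sum_univ_three]

theorem G_apply_zero : G n 0 = X 0 ^ (n + 1) * (2 * X 0 - X 1) := by
  induction n with
  | zero => simp [G_zero, G1]
  | succ n ih => rw [G_succ_apply_zero, ih]; ring

theorem G_one_apply_two : G 1 2 = 2 * X 0 + X 1 := by
  rw [G_succ_apply_two, G_zero]
  simp only [G1, Matrix.cons_val]
  ring

theorem isWeightedHomogeneous_G :
    IsWeightedHomogeneous w3 (G n 0) (n + 2) ∧ IsWeightedHomogeneous w3 (G n 1) (n + 1) ∧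
      IsWeightedHomogeneous w3 (G n 2) n := by
  have hb : IsWeightedHomogeneous w3 (X 0 : R3) 1 := isWeightedHomogeneous_X ℂ w3 0
  have ht : IsWeightedHomogeneous w3 (X 1 : R3) 1 := isWeightedHomogeneous_X ℂ w3 1
  have hk : IsWeightedHomogeneous w3 (X 2 : R3) 2 := isWeightedHomogeneous_X ℂ w3 2
  have h2 : IsWeightedHomogeneous w3 (2 : R3) 0 := isWeightedHomogeneous_C w3 (2 : ℂ)
  induction n with
  | zero =>
    have hl : IsWeightedHomogeneous w3 (2 * X 0 - X 1 : R3) 1 := (zero_add 1 ▸ h2.mul hb).sub ht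
    exact G_zero ▸ ⟨hb.mul hl, hl, h2⟩
  | succ n ih =>
    obtain ⟨hu, hv, hw⟩ := ih
    rw [G_succ_apply_zero, G_succ_apply_one, G_succ_apply_two]
    refine ⟨?_, hu.add ?_, hv.add ?_⟩
    · exact (by ring : n + 1 + 2 = 1 + (n + 2)) ▸ hb.mul hu
    · exact add_comm n 2 ▸ hk.mul hw
    · exact add_comm n 1 ▸ ht.mul hw

end Components

section Regularity

open RingTheory.Sequence

theorem isWeaklyRegular_of_dvd_G_zero {A : Type*} [CommRing A] [IsDomain A] [DecompositionMonoid A]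
    [Algebra ℂ A] {φ : R3 →ₐ[ℂ] A} {f : R3} (hφ : Function.Surjective φ)
    (hker : RingHom.ker φ = Ideal.span {f}) (hf : f ≠ 0) (hfG : f ∣ G 0 0)
    (hk : Prime (φ (X 2))) (ht : ¬ φ (X 2) ∣ φ (X 1)) (hw : ¬ φ (X 2) ∣ φ (G 1 2)) (n : ℕ) :
    IsWeaklyRegular R3 [f, G (n + 1) 1, G (n + 1) 2] := by
  have hu (n : ℕ) : φ (G n 0) = 0 := by
    induction n with
    | zero => exact RingHom.mem_ker.1 (hker ▸ Ideal.mem_span_singleton.2 hfG)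
    | succ n ih => rw [G_succ_apply_zero, map_mul, ih, mul_zero]
  have hv (n : ℕ) : φ (G (n + 1) 1) = φ (X 2) * φ (G n 2) := by
    rw [G_succ_apply_one, map_add, hu, zero_add, map_mul]
  have hrec (n : ℕ) : φ (G (n + 2) 2) = φ (X 2) * φ (G n 2) + φ (X 1) * φ (G (n + 1) 2) := by
    rw [G_succ_apply_two, map_add, hv, map_mul]
  have hunit : IsUnit (φ (G 0 2)) := by
    have h2 : IsUnit (2 : R3) := (IsUnit.mk0 (2 : ℂ) two_ne_zero).map C
    exact G_zero ▸ h2.map φ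
  have hndvd := not_dvd_of_recurrence (w := fun n => φ (G n 2)) hk hrec ht
    (fun h => hk.not_isUnit (isUnit_of_dvd_unit h hunit)) hw
  have hcoprime := isRelPrime_mul_of_recurrence hk hrec hndvd hunit.isRelPrime_left n
  refine isWeaklyRegular_cons_of_ker_eq_span (φ := φ.toRingHom) hφ hker (.of_ne_zero hf) ?_
  refine isWeaklyRegular_pair_of_isRelPrime (r := φ _) (s := φ _) ?_ ?_
  · rw [hv]
    exact mul_ne_zero hk.ne_zero fun h => hndvd n (h ▸ dvd_zero _)
  · rwa [hv]

theorem isWeaklyRegular_X_zero_G (n : ℕ) :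
    IsWeaklyRegular R3 [X 0, G (n + 1) 1, G (n + 1) 2] := by
  let φ : R3 →ₐ[ℂ] MvPolynomial (Fin 2) ℂ := aeval ![0, X 0, X 1]
  let ψ : MvPolynomial (Fin 2) ℂ →ₐ[ℂ] R3 := aeval ![X 1, X 2]
  have hφψ : φ.comp ψ = AlgHom.id ℂ _ := by
    ext i : 1
    fin_cases i <;> simp [φ, ψ]
  have hker : RingHom.ker φ = Ideal.span {X 0} := by
    refine ker_eq_of_forall_X_sub_mem (ψ := ψ) ?_ fun i => ?_
    · simp [φ, RingHom.mem_ker]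
    · fin_cases i <;> simp [φ, ψ]
  refine isWeaklyRegular_of_dvd_G_zero (φ := φ) (fun x => ⟨ψ x, DFunLike.congr_fun hφψ x⟩)
    hker (X_ne_zero 0) (by simp [G_zero, G1]) ?_ ?_ ?_ n
  · simp [φ, X_prime]
  · simp [φ, X_dvd_X]
  · simp [φ, G_one_apply_two, X_dvd_X]

theorem isWeaklyRegular_two_mul_X_sub_G (n : ℕ) :
    IsWeaklyRegular R3 [2 * X 0 - X 1, G (n + 1) 1, G (n + 1) 2] := by
  let φ : R3 →ₐ[ℂ] MvPolynomial (Fin 2) ℂ := aeval ![X 0, 2 * X 0, X 1]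
  let ψ : MvPolynomial (Fin 2) ℂ →ₐ[ℂ] R3 := aeval ![X 0, X 2]
  have hφψ : φ.comp ψ = AlgHom.id ℂ _ := by
    ext i : 1
    fin_cases i <;> simp [φ, ψ]
  have hker : RingHom.ker φ = Ideal.span {2 * X 0 - X 1} := by
    refine ker_eq_of_forall_X_sub_mem (ψ := ψ) ?_ fun i => ?_
    · simp [φ, RingHom.mem_ker, map_ofNat]
    · fin_cases i
      · simp [φ, ψ]
      · exact Ideal.mem_span_singleton.2 ⟨-1, by simp [φ, ψ, map_ofNat]⟩
      · simp [φ, ψ]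
  have h0 : (2 * X 0 - X 1 : R3) ≠ 0 := fun h => by
    simpa using congrArg (eval ![0, 1, 0]) h
  refine isWeaklyRegular_of_dvd_G_zero (φ := φ) (fun x => ⟨ψ x, DFunLike.congr_fun hφψ x⟩)
    hker h0 (by simp [G_zero, G1]) ?_ ?_ ?_ n
  · simp [φ, X_prime]
  · intro h
    simpa [φ, map_ofNat] using map_dvd (eval ![1, 0]) h
  · intro h
    simpa [φ, G_one_apply_two, map_ofNat] using map_dvd (eval ![1, 0]) h

theorem isWeaklyRegular_ofFn_G (n : ℕ) : IsWeaklyRegular R3 (List.ofFn (G (n + 1))) := by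
  simp only [List.ofFn_succ, List.ofFn_zero]
  rw [G_apply_zero]
  exact isWeaklyRegular_mul_cons (isWeaklyRegular_pow_cons (isWeaklyRegular_X_zero_G n) (n + 1))
    (isWeaklyRegular_two_mul_X_sub_G n)

end Regularity

theorem prod_one_sub_X_pow_w3 : ∏ i, (1 - PowerSeries.X ^ w3 i : PowerSeries ℤ) =
    (1 - PowerSeries.X) ^ 2 * (1 - PowerSeries.X ^ 2) := by
  simp only [Fin.prod_univ_three, w3, Matrix.cons_val, pow_one, sq]

theorem mk_finrank_comp3 (n : ℕ) :
    PowerSeries.mk (fun p => (Module.finrank ℂ (comp3 n p) : ℤ)) =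
      hilbertSeries (weightedHomogeneousSubmodule ℂ w3) (Ideal.span (Set.range (G n))) := by
  have hrange : Set.range (G n) = {G n 0, G n 1, G n 2} := by
    ext; simp [Fin.exists_fin_succ, eq_comm]
  rw [hrange]
  rfl

/-- With the grading `deg b = deg t = 1`, `deg k = 2`, the polynomials
`u_{n+1}, v_{n+1}, w_{n+1}` are homogeneous of degrees `n+2`, `n+1`, `n` respectively,
and for every `n ≥ 1` the Hilbert series of the graded quotient satisfies
`(1−T)²(1−T²) · Σ_p dim_ℂ (ℂ[b,t,k]/(u_{n+1},v_{n+1},w_{n+1}))_p · T^p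
  = (1−Tⁿ)(1−T^{n+1})(1−T^{n+2})` in `ℤ[[T]]`. -/
theorem stmt13 (n : ℕ) (hn : 1 ≤ n) :
    (IsWeightedHomogeneous w3 (G n 0) (n + 2) ∧
      IsWeightedHomogeneous w3 (G n 1) (n + 1) ∧
      IsWeightedHomogeneous w3 (G n 2) n) ∧
    (1 - PowerSeries.X) ^ 2 * (1 - PowerSeries.X ^ 2) *
        PowerSeries.mk (fun p => (Module.finrank ℂ (comp3 n p) : ℤ)) =
      (1 - PowerSeries.X ^ n) * (1 - PowerSeries.X ^ (n + 1))
        * (1 - PowerSeries.X ^ (n + 2)) := by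
  obtain ⟨m, rfl⟩ := Nat.exists_eq_add_of_le' hn
  have hhom := isWeightedHomogeneous_G (m + 1)
  have hw3 : ∀ i, w3 i ≠ 0 := by simp [Fin.forall_fin_succ, w3]
  have hdeg : ∀ i, IsWeightedHomogeneous w3 (G (m + 1) i) (![m + 3, m + 2, m + 1] i) := by
    simpa [Fin.forall_fin_succ] using hhom
  have hseries := prod_mul_hilbertSeries_span_range hw3 hdeg (isWeaklyRegular_ofFn_G m)
  rw [prod_one_sub_X_pow_w3, ← mk_finrank_comp3] at hseries
  refine ⟨hhom, hseries.trans ?_⟩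
  simp only [Fin.prod_univ_three, Matrix.cons_val]
  ring

end
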